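/- Let r,q ≥ 1 with rq > 1. For all tags L,L' ∈ {A,B} and indices (j,k), (j',k') with (L,j,k) ≠ (A,0,0) and (L',j',k') ≠ (A,0,0): there is an edge from the label L^j_k to the label L'^{j'}_{k'} in the connection digraph of σ_{rq} (labels via the (r,q)-labeling) if and only if there is an edge from L^k_j to L'^{k'}_{j'} in the connection digraph of σ_{qr} (labels via the (q,r)-labeling, in which the first index ranges over 0,…,q and the second over 0,…,r). In other words, the index-swapping label map Λ is a direction-preserving isomorphism of the two connection digraphs. -/

import Mathlib

/-- Morse numbers `i_j` of a permutation `σ` of `{1,…,N}` (extended to `ℕ`),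
via the recursion `i_1 = 0`,
`i_{j+1} = i_j + (-1)^(j+1) * sign (σ⁻¹(j+1) - σ⁻¹(j))`. -/
def morse (σ : Equiv.Perm ℕ) : ℕ → ℤ
  | 0 => 0
  | 1 => 0
  | (j+2) => morse σ (j+1) +
      (-1)^(j+2) * Int.sign ((σ.symm (j+2) : ℤ) - (σ.symm (j+1) : ℤ))

/-- Zero numbers `z_{j k}`, recursion in the first index `j`, second index `k` fixed:
`z_{1k} = 0`, `z_{kk} = i_k`, `z_{k+1,k} = min (i_k, i_{k+1})`, and otherwise
`z_{j+1,k} = z_{jk} + ((-1)^(j+1)/2) * (sign (σ⁻¹(j+1) - σ⁻¹(k)) - sign (σ⁻¹(j) - σ⁻¹(k)))`. -/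
def zrec (σ : Equiv.Perm ℕ) (k : ℕ) : ℕ → ℤ
  | 0 => 0
  | 1 => 0
  | (j+2) =>
      if j+2 = k then morse σ k
      else if j+1 = k then min (morse σ k) (morse σ (k+1))
      else zrec σ k (j+1) +
        ((-1)^(j+2) * (Int.sign ((σ.symm (j+2) : ℤ) - (σ.symm k : ℤ))
          - Int.sign ((σ.symm (j+1) : ℤ) - (σ.symm k : ℤ)))) / 2

/-- The zero number `z_{m n}`. -/
def zfun (σ : Equiv.Perm ℕ) (m n : ℕ) : ℤ := zrec σ n m

/-- The connection digraph of a dissipative Morse permutation `σ` of `{1,…,N}`: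
an edge `m ⤳ n` iff `i_m = i_n + 1` and no `w` strictly between `m` and `n`
blocks, i.e. satisfies `z_{mw} = z_{wn} = z_{mn}`. -/
def hasEdge (N : ℕ) (σ : Equiv.Perm ℕ) (m n : ℕ) : Prop :=
  1 ≤ m ∧ m ≤ N ∧ 1 ≤ n ∧ n ≤ N ∧
  morse σ m = morse σ n + 1 ∧
  ¬ ∃ w : ℕ, min m n < w ∧ w < max m n ∧
      zfun σ m w = zfun σ w n ∧ zfun σ w n = zfun σ m n

/-- A dissipative permutation of `{1,…,N}`. -/
def Dissipative (N : ℕ) (σ : Equiv.Perm ℕ) : Prop :=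
  Set.BijOn σ (Set.Icc 1 N) (Set.Icc 1 N) ∧ σ 1 = 1 ∧ σ N = N

/-- The Morse property: all Morse numbers are nonnegative. -/
def MorseProp (N : ℕ) (σ : Equiv.Perm ℕ) : Prop :=
  ∀ j, 1 ≤ j → j ≤ N → 0 ≤ morse σ j

/-- Morse counts `μ(i) = #{j ∈ {1,…,N} : i_j = i}`. -/
def morseCount (N : ℕ) (σ : Equiv.Perm ℕ) (i : ℤ) : ℕ :=
  ((Finset.Icc 1 N).filter (fun j => morse σ j = i)).card

/-- The primitive 3-nose permutation `σ_{rq}` of `{1,…,N}`, `N = 2(r+1)(q+1)-1`,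
characterized by its defining relations, extended to a permutation of `ℕ`
fixing everything outside `{1,…,N}`. -/
def SigmaRQ (r q : ℕ) (σ : Equiv.Perm ℕ) : Prop :=
  (∀ a, a ∉ Set.Icc 1 (2*(r+1)*(q+1) - 1) → σ a = a) ∧
  (∀ j k, j ≤ r → k ≤ q →
    σ (2*((q+1)*j+k)+1) = 2*(j+(r+1)*k)+1) ∧
  (∀ j k, j ≤ r → k ≤ q → ¬(j = 0 ∧ k = 0) →
    σ (2*((q+1)*(r-j)+(q-k)+1)) = 2*(j+(r+1)*k))

/-- Tags `A`, `B` of equilibrium labels `A^j_k`, `B^j_k`. -/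
inductive Tag | A | B
deriving DecidableEq

/-- The axis position (`h_1`-position) of the label `L^j_k` for parameters `(r,q)`. -/
def axisPos (r q : ℕ) : Tag → ℕ → ℕ → ℕ
  | Tag.A, j, k => if Odd j then (q+1)*(j-1)+k+1 else (q+1)*(2*r+1-j)+(q-k)+1
  | Tag.B, j, k => if Odd j then (q+1)*j+(q-k)+1 else (q+1)*(2*r-j)+k+1

/-- The meander position (`h_0`-position) of the label `L^j_k` for parameters `(r,q)`. -/
def meanderPos (r q : ℕ) : Tag → ℕ → ℕ → ℕ
  | Tag.A, j, k => if Odd k then (r+1)*(2*q+1-k)+(2*r+1-j) else (r+1)*k+j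
  | Tag.B, j, k => if Odd k then (r+1)*(2*q+1-k)+j else (r+1)*(k+1)+(r-j)

/-- The suspension `σ̃` of a dissipative permutation `σ` of `{1,…,N}`:
`σ̃(1) = 1`, `σ̃(N+2) = N+2`, and `σ̃(a+1) = N+2 - σ(a)` for `1 ≤ a ≤ N`. -/
def IsSuspension (N : ℕ) (σ σt : Equiv.Perm ℕ) : Prop :=
  σt 1 = 1 ∧ σt (N+2) = N+2 ∧ ∀ a, 1 ≤ a → a ≤ N → σt (a+1) = N+2 - σ a

/-- The label `A^0_0` is the distinguished (formal) vertex `⋆`. -/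
def IsStar (L : Tag) (j k : ℕ) : Prop := L = Tag.A ∧ j = 0 ∧ k = 0

/-- Tag swap `A ↔ B`, used by the reversor. -/
def tagSwap : Tag → Tag
  | Tag.A => Tag.B
  | Tag.B => Tag.A

/-!
The permutation `σ_{qr}` is `σ_{rq}⁻¹` conjugated by the reversal `a ↦ N + 1 - a`: exchanging the
two indices of the labels exchanges the meander order with the reversed axis order. The Morse and
zero numbers of labels have closed forms which are visibly invariant under this exchange, so only
betweenness in the meander order could change. The parity of `z_{mn}` records whether the meander
order and the axis order agree on `m` and `n`. Hence, when `z_{mw} = z_{wn}`, the equilibrium `w`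
lies between `m` and `n` in one order if and only if it does in the other, and `w` blocks an edge
before the exchange if and only if it does afterwards.

The closed forms are correct because meander neighbours are joined by an elementary step, which
changes a Morse number by `±1` and a zero number by `0` or the same `±1`; parity then decides
every choice left open by the recursions.
-/

/-- Properties that determine the Morse numbers `I m` and the zero numbers `Z m n` of `σ` on
`{1,…,N}`. The field `even_zero_iff` says that the parity of a zero number records whether the
meander order `<` and the axis order (`σ.symm` followed by `<`) of the two equilibria agree. -/
structure IsMorseZeroData (N : ℕ) (σ : Equiv.Perm ℕ) (I : ℕ → ℤ) (Z : ℕ → ℕ → ℤ) : Prop where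
  index_one : I 1 = 0
  index_succ {m : ℕ} : 1 ≤ m → m < N → I (m + 1) = I m + 1 ∨ I (m + 1) = I m - 1
  zero_self (n : ℕ) : Z n n = I n
  zero_one {n : ℕ} : 1 ≤ n → n ≤ N → Z 1 n = 0
  zero_succ_self {m : ℕ} : 1 ≤ m → m < N → Z (m + 1) m = min (I m) (I (m + 1))
  zero_succ {m n : ℕ} : 1 ≤ m → m < N → 1 ≤ n → n ≤ N → n ≠ m → n ≠ m + 1 →
    Z (m + 1) n = Z m n ∨ Z (m + 1) n = Z m n + (I (m + 1) - I m)
  even_zero_iff {m n : ℕ} : 1 ≤ m → m ≤ N → 1 ≤ n → n ≤ N → m ≠ n →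
    (Even (Z m n) ↔ (m < n ↔ σ.symm m < σ.symm n))

lemma sign_natCast_sub_natCast {a b : ℕ} (hab : a ≠ b) :
    Int.sign ((a : ℤ) - b) = if a < b then -1 else 1 := by
  split_ifs with h
  · exact Int.sign_eq_neg_one_of_neg (by omega)
  · exact Int.sign_eq_one_of_pos (by omega)

namespace IsMorseZeroData

variable {N : ℕ} {σ : Equiv.Perm ℕ} {I : ℕ → ℤ} {Z : ℕ → ℕ → ℤ} {m n : ℕ}

lemma even_index_iff (h : IsMorseZeroData N σ I Z) (hm : 1 ≤ m) (hmN : m ≤ N) :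
    Even (I m) ↔ Odd m := by
  induction m, hm using Nat.le_induction with
  | base => simp [h.index_one]
  | succ m hm ih =>
    rw [Nat.odd_add_one, ← ih (by omega)]
    rcases h.index_succ hm (by omega) with h' | h' <;> rw [h'] <;> grind

lemma neg_one_pow_mul_sign (h : IsMorseZeroData N σ I Z) (hm : 1 ≤ m) (hmN : m < N) :
    (-1) ^ (m + 1) * Int.sign ((σ.symm (m + 1) : ℤ) - σ.symm m) = I (m + 1) - I m := by
  have hmin : Even (min (I m) (I (m + 1))) ↔ ¬ σ.symm (m + 1) < σ.symm m := by
    rw [← h.zero_succ_self hm hmN, h.even_zero_iff (by omega) hmN hm hmN.le (by omega)]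
    simp
  have hindex := h.even_index_iff hm hmN.le
  have hsucc := h.index_succ hm hmN
  rw [sign_natCast_sub_natCast (σ.symm.injective.ne (by omega))]
  rcases m.even_or_odd with hm' | hm'
  · rw [hm'.add_one.neg_one_pow]
    grind
  · rw [hm'.add_one.neg_one_pow]
    grind

theorem morse_eq (h : IsMorseZeroData N σ I Z) (hm : 1 ≤ m) (hmN : m ≤ N) :
    morse σ m = I m := by
  induction m, hm using Nat.le_induction with
  | base => exact h.index_one.symm
  | succ m hm ih =>
    obtain ⟨l, rfl⟩ := Nat.exists_eq_add_of_le' hm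
    rw [morse, ih (by omega), h.neg_one_pow_mul_sign hm (by omega)]
    ring

lemma neg_one_pow_mul_sign_sub_sign (h : IsMorseZeroData N σ I Z) (hm : 1 ≤ m) (hmN : m < N)
    (hn : 1 ≤ n) (hnN : n ≤ N) (hnm : n ≠ m) (hnm' : n ≠ m + 1) :
    (-1) ^ (m + 1) * (Int.sign ((σ.symm (m + 1) : ℤ) - σ.symm n) -
      Int.sign ((σ.symm m : ℤ) - σ.symm n)) = 2 * (Z (m + 1) n - Z m n) := by
  have hsign := h.neg_one_pow_mul_sign hm hmN
  have hZ := h.zero_succ hm hmN hn hnN hnm hnm'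
  have hI := h.index_succ hm hmN
  have heven := h.even_zero_iff hm hmN.le hn hnN hnm.symm
  have heven' := h.even_zero_iff (by omega) hmN hn hnN hnm'.symm
  have hlt : m + 1 < n ↔ m < n := by omega
  rw [hlt] at heven'
  rw [sign_natCast_sub_natCast (σ.symm.injective.ne (by omega))] at hsign ⊢
  rw [sign_natCast_sub_natCast (σ.symm.injective.ne (by omega))]
  generalize (-1 : ℤ) ^ (m + 1) = e at hsign ⊢
  grind

theorem zfun_eq (h : IsMorseZeroData N σ I Z) (hm : 1 ≤ m) (hmN : m ≤ N) (hn : 1 ≤ n)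
    (hnN : n ≤ N) : zfun σ m n = Z m n := by
  unfold zfun
  induction m, hm using Nat.le_induction with
  | base => exact (h.zero_one hn hnN).symm
  | succ m hm ih =>
    obtain ⟨l, rfl⟩ := Nat.exists_eq_add_of_le' hm
    rw [zrec]
    split_ifs with hn₁ hn₂
    · rw [h.morse_eq hn hnN, ← h.zero_self, hn₁]
    · subst hn₂
      rw [h.zero_succ_self hm (by omega), h.morse_eq hm (by omega), h.morse_eq (by omega) hmN]
    · rw [ih (by omega),
        h.neg_one_pow_mul_sign_sub_sign hm (by omega) hn hnN (Ne.symm hn₂) (Ne.symm hn₁)]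
      omega

end IsMorseZeroData

lemma between_iff_ne_and_lt_iff_lt {α : Type*} [LinearOrder α] {a b c : α} :
    min a b < c ∧ c < max a b ↔ c ≠ a ∧ c ≠ b ∧ (a < c ↔ c < b) := by
  grind

section Reflection

variable {N : ℕ} {σ σ' : Equiv.Perm ℕ} {m n w : ℕ}

/-- The blocking condition of the connection digraph: `w` lies strictly between `m` and `n` in the
meander order and `z_{mw} = z_{wn} = z_{mn}`. -/
def Blocks (σ : Equiv.Perm ℕ) (m n w : ℕ) : Prop :=
  min m n < w ∧ w < max m n ∧ zfun σ m w = zfun σ w n ∧ zfun σ w n = zfun σ m n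

/-- Position of the equilibrium `m` along the axis, counted from the far end: its meander position
for the permutation obtained from `σ⁻¹` by conjugation with `a ↦ N + 1 - a`. -/
def reflect (N : ℕ) (σ : Equiv.Perm ℕ) (m : ℕ) : ℕ := N + 1 - σ.symm m

/-- `reflect N σ` carries the Morse numbers and zero numbers of `σ` to those of `σ'`, and the parity
of the zero numbers of `σ` compares the meander order with the axis order. -/
structure IsReflection (N : ℕ) (σ σ' : Equiv.Perm ℕ) : Prop where
  bijOn : Set.BijOn σ (Set.Icc 1 N) (Set.Icc 1 N)
  morse_reflect : ∀ m ∈ Set.Icc 1 N, morse σ' (reflect N σ m) = morse σ m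
  zfun_reflect : ∀ m ∈ Set.Icc 1 N, ∀ n ∈ Set.Icc 1 N,
    zfun σ' (reflect N σ m) (reflect N σ n) = zfun σ m n
  even_zfun_iff : ∀ m ∈ Set.Icc 1 N, ∀ n ∈ Set.Icc 1 N, m ≠ n →
    (Even (zfun σ m n) ↔ (m < n ↔ σ.symm m < σ.symm n))

namespace IsReflection

lemma symm_mem (h : IsReflection N σ σ') (hm : m ∈ Set.Icc 1 N) : σ.symm m ∈ Set.Icc 1 N :=
  (Equiv.bijOn_symm.mpr h.bijOn).mapsTo hm

lemma reflect_mem (h : IsReflection N σ σ') (hm : m ∈ Set.Icc 1 N) :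
    reflect N σ m ∈ Set.Icc 1 N := by
  have := h.symm_mem hm
  simp only [reflect, Set.mem_Icc] at *
  omega

lemma exists_reflect_eq (h : IsReflection N σ σ') (hw : w ∈ Set.Icc 1 N) :
    ∃ m ∈ Set.Icc 1 N, reflect N σ m = w := by
  simp only [Set.mem_Icc] at hw
  refine ⟨σ (N + 1 - w), h.bijOn.mapsTo (Set.mem_Icc.mpr (by omega)), ?_⟩
  rw [reflect, σ.symm_apply_apply]
  omega

lemma reflect_lt_reflect_iff (h : IsReflection N σ σ') (hm : m ∈ Set.Icc 1 N)
    (hn : n ∈ Set.Icc 1 N) : reflect N σ m < reflect N σ n ↔ σ.symm n < σ.symm m := by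
  have hm' := h.symm_mem hm
  have hn' := h.symm_mem hn
  simp only [reflect, Set.mem_Icc] at *
  omega

lemma injOn_reflect (h : IsReflection N σ σ') : Set.InjOn (reflect N σ) (Set.Icc 1 N) := by
  intro m hm n hn hmn
  have hm' := h.symm_mem hm
  have hn' := h.symm_mem hn
  refine σ.symm.injective ?_
  simp only [reflect, Set.mem_Icc] at *
  omega

/-- As `z_{mw}` and `z_{wn}` have the same parity, the meander and axis orders agree on `m`, `w` if
and only if they agree on `w`, `n`. -/
lemma between_reflect_iff (h : IsReflection N σ σ') (hm : m ∈ Set.Icc 1 N)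
    (hn : n ∈ Set.Icc 1 N) (hw : w ∈ Set.Icc 1 N) (hz : zfun σ m w = zfun σ w n) :
    min (reflect N σ m) (reflect N σ n) < reflect N σ w ∧
      reflect N σ w < max (reflect N σ m) (reflect N σ n) ↔ min m n < w ∧ w < max m n := by
  rw [between_iff_ne_and_lt_iff_lt, between_iff_ne_and_lt_iff_lt,
    h.reflect_lt_reflect_iff hm hw, h.reflect_lt_reflect_iff hw hn]
  rcases eq_or_ne w m with rfl | hwm
  · simp
  rcases eq_or_ne w n with rfl | hwn
  · simp
  have hwm' : reflect N σ w ≠ reflect N σ m := h.injOn_reflect.ne hw hm hwm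
  have hwn' : reflect N σ w ≠ reflect N σ n := h.injOn_reflect.ne hw hn hwn
  have heven := h.even_zfun_iff m hm w hw hwm.symm
  have heven' := h.even_zfun_iff w hw n hn hwn
  have hne := σ.symm.injective.ne hwm
  have hne' := σ.symm.injective.ne hwn
  grind

lemma blocks_reflect_iff (h : IsReflection N σ σ') (hm : m ∈ Set.Icc 1 N)
    (hn : n ∈ Set.Icc 1 N) (hw : w ∈ Set.Icc 1 N) :
    Blocks σ' (reflect N σ m) (reflect N σ n) (reflect N σ w) ↔ Blocks σ m n w := by
  unfold Blocks
  rw [h.zfun_reflect m hm w hw, h.zfun_reflect w hw n hn, h.zfun_reflect m hm n hn]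
  have := h.between_reflect_iff hm hn hw
  tauto

lemma exists_blocks_reflect_iff (h : IsReflection N σ σ') (hm : m ∈ Set.Icc 1 N)
    (hn : n ∈ Set.Icc 1 N) :
    (∃ w, Blocks σ' (reflect N σ m) (reflect N σ n) w) ↔ ∃ w, Blocks σ m n w := by
  have mem_of_blocks {τ : Equiv.Perm ℕ} {a b w : ℕ} (ha : a ∈ Set.Icc 1 N)
      (hb : b ∈ Set.Icc 1 N) (hw : Blocks τ a b w) : w ∈ Set.Icc 1 N := by
    obtain ⟨hlt, hgt, -⟩ := hw
    simp only [Set.mem_Icc] at *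
    omega
  constructor
  · rintro ⟨w', hw'⟩
    obtain ⟨w, hw, rfl⟩ :=
      h.exists_reflect_eq (mem_of_blocks (h.reflect_mem hm) (h.reflect_mem hn) hw')
    exact ⟨w, (h.blocks_reflect_iff hm hn hw).mp hw'⟩
  · rintro ⟨w, hw⟩
    exact ⟨_, (h.blocks_reflect_iff hm hn (mem_of_blocks hm hn hw)).mpr hw⟩

theorem hasEdge_reflect_iff (h : IsReflection N σ σ') (hm : m ∈ Set.Icc 1 N)
    (hn : n ∈ Set.Icc 1 N) :
    hasEdge N σ' (reflect N σ m) (reflect N σ n) ↔ hasEdge N σ m n := by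
  have hblocks := h.exists_blocks_reflect_iff hm hn
  have hm' := h.reflect_mem hm
  have hn' := h.reflect_mem hn
  simp only [Set.mem_Icc] at hm hn hm' hn'
  unfold Blocks at hblocks
  unfold hasEdge
  rw [h.morse_reflect m hm, h.morse_reflect n hn, hblocks]
  tauto

end IsReflection

end Reflection

/-- The label `L^j_k` of an equilibrium, with tag `L`, upper index `j` and lower index `k`. -/
structure Label where
  tag : Tag
  upper : ℕ
  lower : ℕ

namespace Label

/-- The label map `Λ` exchanging the two indices. -/
def swap (a : Label) : Label := ⟨a.tag, a.lower, a.upper⟩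

/-- The formal label `A^0_0`; its meander position is `0`. -/
def star : Label := ⟨Tag.A, 0, 0⟩

/-- The labels `L^j_k` with `j ≤ r` and `k ≤ q`, including the formal one. -/
def labels (r q : ℕ) : Set Label := {a | a.upper ≤ r ∧ a.lower ≤ q}

/-- The axis position of a label. -/
def axis (r q : ℕ) (a : Label) : ℕ := axisPos r q a.tag a.upper a.lower

/-- The meander position of a label. -/
def meander (r q : ℕ) (a : Label) : ℕ := meanderPos r q a.tag a.upper a.lower

/-- Closed form of the Morse number of a label. -/
def index : Label → ℤ
  | ⟨Tag.A, j, k⟩ => j + k - 1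
  | ⟨Tag.B, j, k⟩ => j + k

/-- Closed form of the zero number of a pair of labels. -/
def zero : Label → Label → ℤ
  | ⟨Tag.A, j, k⟩, ⟨Tag.A, x, y⟩ =>
    min j x + min k y - if j < x ∧ y < k ∨ x < j ∧ k < y then 0 else 1
  | ⟨Tag.A, j, k⟩, ⟨Tag.B, x, y⟩ => min j (x + 1) + min k (y + 1) - 1
  | ⟨Tag.B, j, k⟩, ⟨Tag.A, x, y⟩ => min (j + 1) x + min (k + 1) y - 1
  | ⟨Tag.B, j, k⟩, ⟨Tag.B, x, y⟩ =>
    min j x + min k y + if j < x ∧ k < y ∨ x < j ∧ y < k then 1 else 0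

/-- Arranging the meander positions in rows of length `r + 1`, the row containing a label. -/
def row (q : ℕ) : Label → ℕ
  | ⟨Tag.A, _, k⟩ => if Odd k then 2 * q + 2 - k else k
  | ⟨Tag.B, _, k⟩ => if Odd k then 2 * q + 1 - k else k + 1

/-- The offset of a label within its row of `r + 1` meander positions. -/
def col (r : ℕ) : Label → ℕ
  | ⟨Tag.A, j, k⟩ => if Odd k then r - j else j
  | ⟨Tag.B, j, k⟩ => if Odd k then j else r - j

variable {r q : ℕ} {a b c : Label}

lemma swap_mem_labels (ha : a ∈ labels r q) : a.swap ∈ labels q r := ⟨ha.2, ha.1⟩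

lemma star_mem_labels : star ∈ labels r q := ⟨Nat.zero_le r, Nat.zero_le q⟩

lemma swap_ne_star (ha : a ≠ star) : a.swap ≠ star := by
  rintro h
  apply ha
  rcases a with ⟨L, j, k⟩
  simp only [swap, star, mk.injEq] at h ⊢
  tauto

lemma index_swap (a : Label) : a.swap.index = a.index := by
  rcases a with ⟨_ | _, j, k⟩ <;> simp only [swap, index] <;> ring

lemma zero_swap_swap (a b : Label) : zero a.swap b.swap = zero a b := by
  rcases a with ⟨_ | _, j, k⟩ <;> rcases b with ⟨_ | _, x, y⟩ <;> simp only [swap, zero] <;> grind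

lemma zero_self (a : Label) : zero a a = a.index := by
  rcases a with ⟨_ | _, j, k⟩ <;> simp [zero, index]

lemma zero_star (a : Label) : zero star a = -1 := by
  rcases a with ⟨_ | _, x, y⟩ <;> simp [star, zero]

lemma row_le (ha : a ∈ labels r q) : a.row q ≤ 2 * q + 1 := by
  rcases a with ⟨_ | _, j, k⟩ <;> simp only [labels, Set.mem_ofPred_eq, row] at * <;> grind

lemma col_le (ha : a ∈ labels r q) : a.col r ≤ r := by
  rcases a with ⟨_ | _, j, k⟩ <;> simp only [labels, Set.mem_ofPred_eq, col] at * <;> grind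

lemma meander_eq (ha : a ∈ labels r q) : a.meander r q = (r + 1) * a.row q + a.col r := by
  rcases a with ⟨_ | _, j, k⟩ <;>
    simp only [labels, Set.mem_ofPred_eq, meander, meanderPos, row, col] at * <;> split_ifs
  · rw [show 2 * q + 2 - k = 2 * q + 1 - k + 1 by omega]
    rw [mul_add_one]
    omega
  all_goals rfl

lemma natCast_axis_A {j k : ℕ} (hj : j ≤ r) (hk : k ≤ q) : (axis r q ⟨Tag.A, j, k⟩ : ℤ) =
    (if Odd j then (q + 1) * (j - 1) + k + 1 else (q + 1) * (2 * r + 1 - j) + (q - k) + 1 : ℤ) := by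
  simp only [axis, axisPos]
  split_ifs with h
  · push_cast [h.pos]
    ring
  · push_cast [show j ≤ 2 * r + 1 by omega, hk]
    ring

lemma natCast_axis_B {j k : ℕ} (hj : j ≤ r) (hk : k ≤ q) : (axis r q ⟨Tag.B, j, k⟩ : ℤ) =
    (if Odd j then (q + 1) * j + (q - k) + 1 else (q + 1) * (2 * r - j) + k + 1 : ℤ) := by
  simp only [axis, axisPos]
  split_ifs with h
  · push_cast [hk]
    ring
  · push_cast [show j ≤ 2 * r by omega]
    ring

lemma natCast_meander_A {j k : ℕ} (hj : j ≤ r) (hk : k ≤ q) : (meander r q ⟨Tag.A, j, k⟩ : ℤ) =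
    (if Odd k then (r + 1) * (2 * q + 1 - k) + (2 * r + 1 - j) else (r + 1) * k + j : ℤ) := by
  simp only [meander, meanderPos]
  split_ifs with h
  · push_cast [show j ≤ 2 * r + 1 by omega, show k ≤ 2 * q + 1 by omega]
    ring
  · push_cast
    rfl

lemma natCast_meander_B {j k : ℕ} (hj : j ≤ r) (hk : k ≤ q) : (meander r q ⟨Tag.B, j, k⟩ : ℤ) =
    (if Odd k then (r + 1) * (2 * q + 1 - k) + j else (r + 1) * (k + 1) + (r - j) : ℤ) := by
  simp only [meander, meanderPos]
  split_ifs with h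
  · push_cast [show k ≤ 2 * q + 1 by omega]
    ring
  · push_cast [hj]
    ring

lemma axis_add_meander_swap (ha : a ∈ labels r q) :
    a.axis r q + a.swap.meander q r = 2 * (r + 1) * (q + 1) := by
  obtain ⟨L, j, k⟩ := a
  obtain ⟨hj, hk⟩ : j ≤ r ∧ k ≤ q := ha
  zify
  cases L
  · rw [natCast_axis_A hj hk, swap, natCast_meander_A hk hj]
    split_ifs <;> ring
  · rw [natCast_axis_B hj hk, swap, natCast_meander_B hk hj]
    split_ifs <;> ring

lemma mul_add_lt_mul_add_iff {n u v u' v' : ℕ} (hv : v ≤ n) (hv' : v' ≤ n) :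
    (n + 1) * u + v < (n + 1) * u' + v' ↔ u < u' ∨ u = u' ∧ v < v' := by
  rcases lt_trichotomy u u' with h | rfl | h
  · simp only [h, true_or, iff_true]
    nlinarith
  · simp
  · simp only [h.not_gt, h.ne', false_and, or_self, iff_false, not_lt]
    nlinarith

lemma meander_lt_meander_iff (ha : a ∈ labels r q) (hb : b ∈ labels r q) :
    a.meander r q < b.meander r q ↔ a.row q < b.row q ∨ a.row q = b.row q ∧ a.col r < b.col r := by
  rw [meander_eq ha, meander_eq hb, mul_add_lt_mul_add_iff (col_le ha) (col_le hb)]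

lemma axis_lt_axis_iff (ha : a ∈ labels r q) (hb : b ∈ labels r q) :
    a.axis r q < b.axis r q ↔ b.swap.meander q r < a.swap.meander q r := by
  have := axis_add_meander_swap ha
  have := axis_add_meander_swap hb
  omega

section MeanderOrder

variable {j k x y : ℕ}

lemma meander_A_lt_meander_A_iff (hj : j ≤ r) (hk : k ≤ q) (hx : x ≤ r) (hy : y ≤ q) :
    meander r q ⟨Tag.A, j, k⟩ < meander r q ⟨Tag.A, x, y⟩ ↔
      k < y ∧ Even k ∨ k = y ∧ (if Even k then j < x else x < j) ∨ y < k ∧ Odd y := by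
  rw [meander_lt_meander_iff ⟨hj, hk⟩ ⟨hx, hy⟩]
  simp only [row, col]
  grind

lemma meander_A_lt_meander_B_iff (hj : j ≤ r) (hk : k ≤ q) (hx : x ≤ r) (hy : y ≤ q) :
    meander r q ⟨Tag.A, j, k⟩ < meander r q ⟨Tag.B, x, y⟩ ↔
      k ≤ y ∧ Even k ∨ y < k ∧ Odd y := by
  rw [meander_lt_meander_iff ⟨hj, hk⟩ ⟨hx, hy⟩]
  simp only [row, col]
  grind

lemma meander_B_lt_meander_A_iff (hj : j ≤ r) (hk : k ≤ q) (hx : x ≤ r) (hy : y ≤ q) :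
    meander r q ⟨Tag.B, j, k⟩ < meander r q ⟨Tag.A, x, y⟩ ↔
      k < y ∧ Even k ∨ y ≤ k ∧ Odd y := by
  rw [meander_lt_meander_iff ⟨hj, hk⟩ ⟨hx, hy⟩]
  simp only [row, col]
  grind

lemma meander_B_lt_meander_B_iff (hj : j ≤ r) (hk : k ≤ q) (hx : x ≤ r) (hy : y ≤ q) :
    meander r q ⟨Tag.B, j, k⟩ < meander r q ⟨Tag.B, x, y⟩ ↔
      k < y ∧ Even k ∨ k = y ∧ (if Even k then x < j else j < x) ∨ y < k ∧ Odd y := by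
  rw [meander_lt_meander_iff ⟨hj, hk⟩ ⟨hx, hy⟩]
  simp only [row, col]
  grind

end MeanderOrder

lemma injOn_meander : Set.InjOn (meander r q) (labels r q) := by
  rintro ⟨L, j, k⟩ ⟨hj, hk⟩ ⟨L', x, y⟩ ⟨hx, hy⟩ hab
  have hlt := hab.not_lt
  have hgt := hab.not_gt
  cases L <;> cases L'
  · rw [meander_A_lt_meander_A_iff hj hk hx hy] at hlt
    rw [meander_A_lt_meander_A_iff hx hy hj hk] at hgt
    grind
  · rw [meander_A_lt_meander_B_iff hj hk hx hy] at hlt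
    rw [meander_B_lt_meander_A_iff hx hy hj hk] at hgt
    grind
  · rw [meander_B_lt_meander_A_iff hj hk hx hy] at hlt
    rw [meander_A_lt_meander_B_iff hx hy hj hk] at hgt
    grind
  · rw [meander_B_lt_meander_B_iff hj hk hx hy] at hlt
    rw [meander_B_lt_meander_B_iff hx hy hj hk] at hgt
    grind

lemma even_zero_iff (ha : a ∈ labels r q) (hb : b ∈ labels r q) (hab : a ≠ b) :
    Even (zero a b) ↔ (a.meander r q < b.meander r q ↔ a.axis r q < b.axis r q) := by
  rw [axis_lt_axis_iff ha hb]
  obtain ⟨L, j, k⟩ := a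
  obtain ⟨L', x, y⟩ := b
  obtain ⟨hj, hk⟩ : j ≤ r ∧ k ≤ q := ha
  obtain ⟨hx, hy⟩ : x ≤ r ∧ y ≤ q := hb
  cases L <;> cases L' <;> simp only [swap, zero, ne_eq, mk.injEq, true_and] at hab ⊢
  · rw [meander_A_lt_meander_A_iff hj hk hx hy, meander_A_lt_meander_A_iff hy hx hk hj]
    clear hj hk hx hy
    rcases lt_trichotomy j x with h | h | h <;> rcases lt_trichotomy k y with h' | h' | h' <;> grind
  · rw [meander_A_lt_meander_B_iff hj hk hx hy, meander_B_lt_meander_A_iff hy hx hk hj]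
    clear hj hk hx hy
    grind
  · rw [meander_B_lt_meander_A_iff hj hk hx hy, meander_A_lt_meander_B_iff hy hx hk hj]
    clear hj hk hx hy
    grind
  · rw [meander_B_lt_meander_B_iff hj hk hx hy, meander_B_lt_meander_B_iff hy hx hk hj]
    clear hj hk hx hy
    rcases lt_trichotomy j x with h | h | h <;> rcases lt_trichotomy k y with h' | h' | h' <;> grind

lemma meander_star : star.meander r q = 0 := by
  simp [meander, meanderPos, star]

lemma meander_pos (ha : a ∈ labels r q) (ha₀ : a ≠ star) : 0 < a.meander r q := by
  refine Nat.pos_of_ne_zero fun h ↦ ha₀ (injOn_meander ha star_mem_labels ?_)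
  rw [h, meander_star]

lemma meander_lt (ha : a ∈ labels r q) : a.meander r q < 2 * (r + 1) * (q + 1) := by
  have := row_le ha
  have := col_le ha
  rw [meander_eq ha]
  nlinarith

/-- The index-raising steps between labels at neighbouring meander positions. -/
inductive Climb (r q : ℕ) : Label → Label → Prop
  | upper (L : Tag) (j k : ℕ) : Climb r q ⟨L, j, k⟩ ⟨L, j + 1, k⟩
  | A_B (k : ℕ) : Climb r q ⟨Tag.A, r, k⟩ ⟨Tag.B, r, k⟩
  | B_A (k : ℕ) : Climb r q ⟨Tag.B, 0, k⟩ ⟨Tag.A, 0, k + 2⟩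
  | B_B (k : ℕ) (hk : k + 1 = q) : Climb r q ⟨Tag.B, 0, k⟩ ⟨Tag.B, 0, k + 1⟩

lemma Climb.index_eq (h : Climb r q a b) : b.index = a.index + 1 := by
  rcases h with ⟨_ | _, j, k⟩ | k | k | ⟨k, hk⟩ <;> simp only [index] <;> push_cast <;> ring

lemma Climb.zero_eq (h : Climb r q a b) : zero a b = a.index ∧ zero b a = a.index := by
  rcases h with ⟨_ | _, j, k⟩ | k | k | ⟨k, hk⟩ <;> simp only [index, zero] <;> grind

lemma Climb.zero_eq_or (h : Climb r q a b) (hc : c ∈ labels r q) :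
    zero b c = zero a c ∨ zero b c = zero a c + 1 := by
  obtain ⟨L, x, y⟩ := c
  obtain ⟨hx, hy⟩ : x ≤ r ∧ y ≤ q := hc
  rcases h with ⟨_ | _, j, k⟩ | k | k | ⟨k, hk⟩ <;> cases L <;> simp only [zero] <;> grind

lemma exists_climb_row_col (ha : a ∈ labels r q) (hrow : a.col r = r → a.row q < 2 * q + 1) :
    ∃ b ∈ labels r q, (Climb r q a b ∨ Climb r q b a) ∧
      (b.row q = a.row q ∧ b.col r = a.col r + 1 ∨
        b.row q = a.row q + 1 ∧ b.col r = 0 ∧ a.col r = r) := by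
  obtain ⟨L, j, k⟩ := a
  obtain ⟨hj, hk⟩ : j ≤ r ∧ k ≤ q := ha
  cases L <;> rcases k.even_or_odd with hk' | hk'
  · rcases hj.lt_or_eq with hj | rfl
    · exact ⟨⟨Tag.A, j + 1, k⟩, ⟨hj, hk⟩, .inl (.upper ..), by grind [row, col]⟩
    · exact ⟨⟨Tag.B, j, k⟩, ⟨le_rfl, hk⟩, .inl (.A_B k), by grind [row, col]⟩
  · rcases j with _ | j
    · obtain ⟨l, rfl⟩ : ∃ l, k = l + 2 := ⟨k - 2, by grind [row, col]⟩
      exact ⟨⟨Tag.B, 0, l⟩, ⟨hj, by dsimp; omega⟩, .inr (.B_A l), by grind [row, col]⟩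
    · exact ⟨⟨Tag.A, j, k⟩, ⟨by dsimp; omega, hk⟩, .inr (.upper ..), by grind [row, col]⟩
  · rcases j with _ | j
    · by_cases hkq : k + 2 ≤ q
      · exact ⟨⟨Tag.A, 0, k + 2⟩, ⟨hj, hkq⟩, .inl (.B_A k), by grind [row, col]⟩
      · rcases hk.lt_or_eq with hk | rfl
        · exact ⟨⟨Tag.B, 0, k + 1⟩, ⟨hj, hk⟩, .inl (.B_B k (by omega)), by grind [row, col]⟩
        · obtain ⟨l, rfl⟩ : ∃ l, k = l + 1 := ⟨k - 1, by grind [row, col]⟩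
          exact ⟨⟨Tag.B, 0, l⟩, ⟨hj, by dsimp; omega⟩, .inr (.B_B l rfl), by grind [row, col]⟩
    · exact ⟨⟨Tag.B, j, k⟩, ⟨by dsimp; omega, hk⟩, .inr (.upper ..), by grind [row, col]⟩
  · rcases hj.lt_or_eq with hj | rfl
    · exact ⟨⟨Tag.B, j + 1, k⟩, ⟨hj, hk⟩, .inl (.upper ..), by grind [row, col]⟩
    · exact ⟨⟨Tag.A, j, k⟩, ⟨le_rfl, hk⟩, .inr (.A_B k), by grind [row, col]⟩

lemma exists_climb_meander_succ (ha : a ∈ labels r q)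
    (hN : a.meander r q + 1 < 2 * (r + 1) * (q + 1)) :
    ∃ b ∈ labels r q, (Climb r q a b ∨ Climb r q b a) ∧ b.meander r q = a.meander r q + 1 := by
  have hrow (hcol : a.col r = r) : a.row q < 2 * q + 1 := by
    rw [meander_eq ha, hcol] at hN
    nlinarith
  obtain ⟨b, hb, hab, h⟩ := exists_climb_row_col ha hrow
  refine ⟨b, hb, hab, ?_⟩
  rw [meander_eq ha, meander_eq hb]
  rcases h with ⟨hrow, hcol⟩ | ⟨hrow, hcol, hcol'⟩
  · rw [hrow, hcol, add_assoc]
  · rw [hrow, hcol, hcol']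
    ring

lemma bijOn_meander :
    Set.BijOn (meander r q) (labels r q) (Set.Iio (2 * (r + 1) * (q + 1))) := by
  refine ⟨fun a ha ↦ meander_lt ha, injOn_meander, fun m hm ↦ ?_⟩
  induction m with
  | zero => exact ⟨star, star_mem_labels, meander_star⟩
  | succ m ih =>
    obtain ⟨a, ha, rfl⟩ := ih (Nat.lt_of_succ_lt hm)
    obtain ⟨b, hb, -, hab⟩ := exists_climb_meander_succ ha hm
    exact ⟨b, hb, hab⟩

lemma climb_or_climb (ha : a ∈ labels r q) (hb : b ∈ labels r q)
    (hab : b.meander r q = a.meander r q + 1) : Climb r q a b ∨ Climb r q b a := by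
  obtain ⟨b', hb', h, hab'⟩ := exists_climb_meander_succ ha (hab ▸ meander_lt hb)
  rwa [injOn_meander hb hb' (hab.trans hab'.symm)]

instance : Nonempty Label := ⟨star⟩

/-- The label at meander position `m`, inverse to `meander r q`. -/
noncomputable def labelAt (r q m : ℕ) : Label :=
  Function.invFunOn (meander r q) (labels r q) m

section LabelAt

variable {m : ℕ}

lemma labelAt_mem (hm : m < 2 * (r + 1) * (q + 1)) : labelAt r q m ∈ labels r q :=
  Function.invFunOn_mem (bijOn_meander.surjOn hm)

lemma meander_labelAt (hm : m < 2 * (r + 1) * (q + 1)) : (labelAt r q m).meander r q = m :=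
  Function.invFunOn_eq (bijOn_meander.surjOn hm)

lemma labelAt_meander (ha : a ∈ labels r q) : labelAt r q (a.meander r q) = a :=
  injOn_meander (labelAt_mem (meander_lt ha)) ha (meander_labelAt (meander_lt ha))

lemma labelAt_ne_star (hm : 1 ≤ m) (hmN : m < 2 * (r + 1) * (q + 1)) : labelAt r q m ≠ star := by
  intro h
  have := meander_labelAt hmN
  rw [h, meander_star] at this
  omega

lemma labelAt_zero : labelAt r q 0 = star := by
  rw [← meander_star (r := r) (q := q), labelAt_meander star_mem_labels]

lemma climb_labelAt (hmN : m + 1 < 2 * (r + 1) * (q + 1)) :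
    Climb r q (labelAt r q m) (labelAt r q (m + 1)) ∨
      Climb r q (labelAt r q (m + 1)) (labelAt r q m) := by
  refine climb_or_climb (labelAt_mem (by omega)) (labelAt_mem hmN) ?_
  rw [meander_labelAt hmN, meander_labelAt (by omega)]

lemma climb_star_labelAt_one : Climb r q star (labelAt r q 1) := by
  have hclimb : Climb r q (labelAt r q 0) (labelAt r q 1) ∨ _ := climb_labelAt (by nlinarith)
  rw [labelAt_zero] at hclimb
  refine hclimb.resolve_right fun hdesc ↦ ?_
  generalize labelAt r q (0 + 1) = a at hdesc
  nomatch hdesc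

lemma index_labelAt_one : (labelAt r q 1).index = 0 := by
  rw [climb_star_labelAt_one.index_eq]
  simp [star, index]

end LabelAt

end Label

lemma bijOn_of_forall_notMem {α : Type*} {s : Set α} {σ : Equiv.Perm α}
    (hσ : ∀ a, a ∉ s → σ a = a) : Set.BijOn σ s s := by
  refine σ.bijOn fun a ↦ ⟨fun h ↦ ?_, fun h ↦ ?_⟩
  · by_contra ha
    exact ha (hσ a ha ▸ h)
  · by_contra ha
    exact ha ((σ.injective (hσ _ ha)).symm ▸ h)

namespace SigmaRQ

open Label (labels labelAt)

variable {r q m n : ℕ} {σ σ' : Equiv.Perm ℕ} {a b : Label}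

lemma bijOn (h : SigmaRQ r q σ) :
    Set.BijOn σ (Set.Icc 1 (2 * (r + 1) * (q + 1) - 1)) (Set.Icc 1 (2 * (r + 1) * (q + 1) - 1)) :=
  bijOn_of_forall_notMem h.1

lemma apply_one (h : SigmaRQ r q σ) : σ 1 = 1 := by
  simpa using h.2.1 0 0 (Nat.zero_le r) (Nat.zero_le q)

lemma apply_of_odd (h : SigmaRQ r q σ) {x y : ℕ} {u v : ℤ} (hu : 0 ≤ u ∧ u ≤ r)
    (hv : 0 ≤ v ∧ v ≤ q) (hx : (x : ℤ) = 2 * ((q + 1) * u + v) + 1)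
    (hy : (y : ℤ) = 2 * (u + (r + 1) * v) + 1) : σ x = y := by
  lift u to ℕ using hu.1
  lift v to ℕ using hv.1
  rw [show x = _ by exact_mod_cast hx, show y = _ by exact_mod_cast hy]
  exact h.2.1 u v (by omega) (by omega)

lemma apply_of_even (h : SigmaRQ r q σ) {x y : ℕ} {u v : ℤ} (hu : 0 ≤ u ∧ u ≤ r)
    (hv : 0 ≤ v ∧ v ≤ q) (huv : ¬ (u = 0 ∧ v = 0))
    (hx : (x : ℤ) = 2 * ((q + 1) * (r - u) + (q - v) + 1))
    (hy : (y : ℤ) = 2 * (u + (r + 1) * v)) : σ x = y := by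
  lift u to ℕ using hu.1
  lift v to ℕ using hv.1
  have hur : u ≤ r := by omega
  have hvq : v ≤ q := by omega
  rw [← Nat.cast_sub hur, ← Nat.cast_sub hvq] at hx
  rw [show x = _ by exact_mod_cast hx, show y = _ by exact_mod_cast hy]
  exact h.2.2 u v hur hvq (by exact_mod_cast huv)

lemma apply_axis (h : SigmaRQ r q σ) (ha : a ∈ labels r q) (ha₀ : a ≠ Label.star) :
    σ (a.axis r q) = a.meander r q := by
  obtain ⟨L, j, k⟩ := a
  obtain ⟨hj, hk⟩ : j ≤ r ∧ k ≤ q := ha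
  replace ha₀ : ¬ (L = Tag.A ∧ j = 0 ∧ k = 0) := by
    rintro ⟨rfl, rfl, rfl⟩
    exact ha₀ rfl
  cases L
  · have hx := Label.natCast_axis_A hj hk
    have hy := Label.natCast_meander_A hj hk
    obtain ⟨u, rfl | rfl⟩ := j.even_or_odd' <;> obtain ⟨v, rfl | rfl⟩ := k.even_or_odd' <;>
      simp only [odd_two_mul_add_one, Nat.not_odd_iff_even.mpr (even_two_mul _), if_true,
        if_false] at hx hy <;> push_cast at hx hy
    · exact h.apply_of_even (u := u) (v := v) (by omega) (by omega) (by grind)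
        (by linear_combination hx) (by linear_combination hy)
    · exact h.apply_of_odd (u := r - u) (v := q - v) (by omega) (by omega)
        (by linear_combination hx) (by linear_combination hy)
    · exact h.apply_of_odd (u := u) (v := v) (by omega) (by omega)
        (by linear_combination hx) (by linear_combination hy)
    · exact h.apply_of_even (u := r - u) (v := q - v) (by omega) (by omega) (by omega)
        (by linear_combination hx) (by linear_combination hy)
  · have hx := Label.natCast_axis_B hj hk
    have hy := Label.natCast_meander_B hj hk
    obtain ⟨u, rfl | rfl⟩ := j.even_or_odd' <;> obtain ⟨v, rfl | rfl⟩ := k.even_or_odd' <;>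
      simp only [odd_two_mul_add_one, Nat.not_odd_iff_even.mpr (even_two_mul _), if_true,
        if_false] at hx hy <;> push_cast at hx hy
    · exact h.apply_of_odd (u := r - u) (v := v) (by omega) (by omega)
        (by linear_combination hx) (by linear_combination hy)
    · exact h.apply_of_even (u := u) (v := q - v) (by omega) (by omega) (by omega)
        (by linear_combination hx) (by linear_combination hy)
    · exact h.apply_of_even (u := r - u) (v := v) (by omega) (by omega) (by omega)
        (by linear_combination hx) (by linear_combination hy)
    · exact h.apply_of_odd (u := u) (v := q - v) (by omega) (by omega)
        (by linear_combination hx) (by linear_combination hy)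

lemma symm_meander (h : SigmaRQ r q σ) (ha : a ∈ labels r q) (ha₀ : a ≠ Label.star) :
    σ.symm (a.meander r q) = a.axis r q := by
  rw [← h.apply_axis ha ha₀, σ.symm_apply_apply]

lemma even_zero_labelAt_iff (h : SigmaRQ r q σ) (hm : 1 ≤ m) (hmN : m < 2 * (r + 1) * (q + 1))
    (hn : 1 ≤ n) (hnN : n < 2 * (r + 1) * (q + 1)) (hmn : m ≠ n) :
    Even (Label.zero (labelAt r q m) (labelAt r q n)) ↔ (m < n ↔ σ.symm m < σ.symm n) := by
  have hlabel : labelAt r q m ≠ labelAt r q n := fun hl ↦ hmn <| by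
    rw [← Label.meander_labelAt hmN, hl, Label.meander_labelAt hnN]
  rw [Label.even_zero_iff (Label.labelAt_mem hmN) (Label.labelAt_mem hnN) hlabel,
    ← h.symm_meander (Label.labelAt_mem hmN) (Label.labelAt_ne_star hm hmN),
    ← h.symm_meander (Label.labelAt_mem hnN) (Label.labelAt_ne_star hn hnN),
    Label.meander_labelAt hmN, Label.meander_labelAt hnN]

theorem isMorseZeroData (h : SigmaRQ r q σ) :
    IsMorseZeroData (2 * (r + 1) * (q + 1) - 1) σ (fun m ↦ (labelAt r q m).index)
      fun m n ↦ Label.zero (labelAt r q m) (labelAt r q n) where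
  index_one := Label.index_labelAt_one
  index_succ {m} hm hmN := by
    rcases Label.climb_labelAt (r := r) (q := q) (m := m) (by omega) with hclimb | hclimb
    · exact .inl hclimb.index_eq
    · exact .inr (eq_sub_of_add_eq hclimb.index_eq.symm)
  zero_self n := Label.zero_self _
  zero_one {n} hn hnN := by
    rcases hn.eq_or_lt with rfl | hn'
    · rw [Label.zero_self, Label.index_labelAt_one]
    have hnN' : n < 2 * (r + 1) * (q + 1) := by omega
    have hpos := (Equiv.bijOn_symm.mpr h.bijOn).mapsTo (Set.mem_Icc.mpr ⟨hn, hnN⟩)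
    simp only [Set.mem_Icc] at hpos
    have hsymm_one : σ.symm 1 = 1 := σ.symm_apply_eq.mpr h.apply_one.symm
    have hne := σ.symm.injective.ne hn'.ne
    have heven := h.even_zero_labelAt_iff le_rfl (by omega) hn hnN' hn'.ne
    have hzero := Label.climb_star_labelAt_one.zero_eq_or (Label.labelAt_mem hnN')
    rw [Label.zero_star] at hzero
    grind
  zero_succ_self {m} _ hmN := by
    rcases Label.climb_labelAt (r := r) (q := q) (m := m) (by omega) with hclimb | hclimb
    · rw [hclimb.index_eq, hclimb.zero_eq.2, min_eq_left (by simp)]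
    · rw [hclimb.index_eq, hclimb.zero_eq.1, min_eq_right (by simp)]
  zero_succ {m n} _ hmN hn hnN _ _ := by
    have hmem : labelAt r q n ∈ labels r q := Label.labelAt_mem (by omega)
    rcases Label.climb_labelAt (r := r) (q := q) (m := m) (by omega) with hclimb | hclimb
    · rw [hclimb.index_eq, add_sub_cancel_left]
      exact hclimb.zero_eq_or hmem
    · have := hclimb.zero_eq_or hmem
      rw [hclimb.index_eq]
      omega
  even_zero_iff hm hmN hn hnN hmn :=
    h.even_zero_labelAt_iff hm (by omega) hn (by omega) hmn

theorem morse_meander (h : SigmaRQ r q σ) (ha : a ∈ labels r q) (ha₀ : a ≠ Label.star) :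
    morse σ (a.meander r q) = a.index := by
  have hlt := Label.meander_lt ha
  rw [h.isMorseZeroData.morse_eq (Label.meander_pos ha ha₀) (by omega), Label.labelAt_meander ha]

theorem zfun_meander (h : SigmaRQ r q σ) (ha : a ∈ labels r q) (ha₀ : a ≠ Label.star)
    (hb : b ∈ labels r q) (hb₀ : b ≠ Label.star) :
    zfun σ (a.meander r q) (b.meander r q) = Label.zero a b := by
  have hlta := Label.meander_lt ha
  have hltb := Label.meander_lt hb
  rw [h.isMorseZeroData.zfun_eq (Label.meander_pos ha ha₀) (by omega)
    (Label.meander_pos hb hb₀) (by omega), Label.labelAt_meander ha, Label.labelAt_meander hb]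

lemma reflect_meander (h : SigmaRQ r q σ) (ha : a ∈ labels r q) (ha₀ : a ≠ Label.star) :
    reflect (2 * (r + 1) * (q + 1) - 1) σ (a.meander r q) = a.swap.meander q r := by
  have hadd := Label.axis_add_meander_swap ha
  have hpos : 0 < 2 * (r + 1) * (q + 1) := by positivity
  rw [reflect, h.symm_meander ha ha₀]
  omega

lemma exists_meander_eq (hm : m ∈ Set.Icc 1 (2 * (r + 1) * (q + 1) - 1)) :
    ∃ a ∈ labels r q, a ≠ Label.star ∧ a.meander r q = m := by
  obtain ⟨hm₁, hmN⟩ := hm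
  have hlt : m < 2 * (r + 1) * (q + 1) := by omega
  exact ⟨labelAt r q m, Label.labelAt_mem hlt, Label.labelAt_ne_star hm₁ hlt,
    Label.meander_labelAt hlt⟩

theorem isReflection (h : SigmaRQ r q σ) (h' : SigmaRQ q r σ') :
    IsReflection (2 * (r + 1) * (q + 1) - 1) σ σ' where
  bijOn := h.bijOn
  morse_reflect m hm := by
    obtain ⟨a, ha, ha₀, rfl⟩ := exists_meander_eq hm
    rw [h.reflect_meander ha ha₀, h.morse_meander ha ha₀,
      h'.morse_meander (Label.swap_mem_labels ha) (Label.swap_ne_star ha₀), Label.index_swap]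
  zfun_reflect m hm n hn := by
    obtain ⟨a, ha, ha₀, rfl⟩ := exists_meander_eq hm
    obtain ⟨b, hb, hb₀, rfl⟩ := exists_meander_eq hn
    rw [h.reflect_meander ha ha₀, h.reflect_meander hb hb₀, h.zfun_meander ha ha₀ hb hb₀,
      h'.zfun_meander (Label.swap_mem_labels ha) (Label.swap_ne_star ha₀)
        (Label.swap_mem_labels hb) (Label.swap_ne_star hb₀), Label.zero_swap_swap]
  even_zfun_iff m hm n hn hmn := by
    obtain ⟨a, ha, ha₀, rfl⟩ := exists_meander_eq hm
    obtain ⟨b, hb, hb₀, rfl⟩ := exists_meander_eq hn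
    rw [h.zfun_meander ha ha₀ hb hb₀, h.symm_meander ha ha₀, h.symm_meander hb hb₀]
    exact Label.even_zero_iff ha hb fun hab ↦ hmn (hab ▸ rfl)

theorem hasEdge_swap_iff (h : SigmaRQ r q σ) (h' : SigmaRQ q r σ') (ha : a ∈ labels r q)
    (ha₀ : a ≠ Label.star) (hb : b ∈ labels r q) (hb₀ : b ≠ Label.star) :
    hasEdge (2 * (r + 1) * (q + 1) - 1) σ (σ (a.axis r q)) (σ (b.axis r q)) ↔
      hasEdge (2 * (r + 1) * (q + 1) - 1) σ' (σ' (a.swap.axis q r)) (σ' (b.swap.axis q r)) := by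
  have hmem {c : Label} (hc : c ∈ labels r q) (hc₀ : c ≠ Label.star) :
      c.meander r q ∈ Set.Icc 1 (2 * (r + 1) * (q + 1) - 1) :=
    ⟨Label.meander_pos hc hc₀, Nat.le_sub_one_of_lt (Label.meander_lt hc)⟩
  rw [h.apply_axis ha ha₀, h.apply_axis hb hb₀,
    h'.apply_axis (Label.swap_mem_labels ha) (Label.swap_ne_star ha₀),
    h'.apply_axis (Label.swap_mem_labels hb) (Label.swap_ne_star hb₀),
    ← h.reflect_meander ha ha₀, ← h.reflect_meander hb hb₀,
    (h.isReflection h').hasEdge_reflect_iff (hmem ha ha₀) (hmem hb hb₀)]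

end SigmaRQ

/-- the index-swapping label map `Λ` is a direction-preserving
isomorphism between the connection digraphs of `σ_{rq}` and `σ_{qr}`. -/
theorem stmt_12 (r q : ℕ) (hr : 1 ≤ r) (hq : 1 ≤ q) (hrq : 1 < r*q)
    (σ σ' : Equiv.Perm ℕ) (hσ : SigmaRQ r q σ) (hσ' : SigmaRQ q r σ') :
    ∀ (L L' : Tag) (j k j' k' : ℕ), j ≤ r → k ≤ q → j' ≤ r → k' ≤ q →
      ¬(L = Tag.A ∧ j = 0 ∧ k = 0) → ¬(L' = Tag.A ∧ j' = 0 ∧ k' = 0) →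
      (hasEdge (2*(r+1)*(q+1)-1) σ
          (σ (axisPos r q L j k)) (σ (axisPos r q L' j' k')) ↔
        hasEdge (2*(r+1)*(q+1)-1) σ'
          (σ' (axisPos q r L k j)) (σ' (axisPos q r L' k' j'))) := by
  intro L L' j k j' k' hj hk hj' hk' hne hne'
  have ne_star {L : Tag} {j k : ℕ} (h : ¬ (L = Tag.A ∧ j = 0 ∧ k = 0)) :
      (⟨L, j, k⟩ : Label) ≠ Label.star := by
    simpa [Label.star] using h
  exact hσ.hasEdge_swap_iff hσ' (a := ⟨L, j, k⟩) (b := ⟨L', j', k'⟩) ⟨hj, hk⟩ (ne_star hne)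
    ⟨hj', hk'⟩ (ne_star hne')
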